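/- arXiv:1410.6944 — 2 statements merged into one kernel-verified Lean document; each statement's English description precedes it below -/
import Mathlib

section
/- Let A be a Hopf *-algebra over ℂ, α : A → A an admissible bijection with α-twisted antipode S_α = S∘α, and η : A → D a cocycle for a *-representation π on a complex inner product space D. Then for every a ∈ A with Δ(a) = ∑_{i∈s} xᵢ ⊗ yᵢ (a finite sum): (iii) η((S_α(a))*) = −∑_{i∈s} π((S_α(yᵢ))*)(η((α(xᵢ))*)); (iv) η((α(a))*) = −∑_{i∈s} π((α(yᵢ))*)(η((S_α(xᵢ))*)). -/
open scoped TensorProduct ComplexConjugate ComplexOrder InnerProductSpace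
open Coalgebra

universe u

variable {A : Type u} [Ring A] [HopfAlgebra ℂ A] [StarRing A] [StarModule ℂ A]

/-- The star-compatibility axioms making a Hopf algebra over `ℂ` into a Hopf `*`-algebra:
`Δ(a*) = (*⊗*)(Δ a)` (expressed in Sweedler form), `ε(a*) = conj (ε a)`,
and `S(S(a*)*) = a`.  (The properties `(ab)* = b*a*`, `1* = 1`, involutivity and
conjugate-linearity of `*` are encoded by `StarRing A` and `StarModule ℂ A`.) -/
def IsHopfStar (A : Type u) [Ring A] [HopfAlgebra ℂ A] [StarRing A] [StarModule ℂ A] : Prop :=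
  (∀ (a : A) (ι : Type u) (s : Finset ι) (x y : ι → A),
      comul (R := ℂ) a = ∑ i ∈ s, x i ⊗ₜ[ℂ] y i →
      comul (R := ℂ) (star a) = ∑ i ∈ s, star (x i) ⊗ₜ[ℂ] star (y i)) ∧
  (∀ a : A, counit (R := ℂ) (star a) = conj (counit (R := ℂ) a)) ∧
  (∀ a : A, HopfAlgebra.antipode (R := ℂ)
      (star (HopfAlgebra.antipode (R := ℂ) (star a))) = a)

/-- `α : A → A` is an admissible bijection: (i) a unital algebra homomorphism
(`ℂ`-linearity is part of the data `α : A →ₗ[ℂ] A`); (ii) `α((α(a*))*) = a`;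
(iii) `(α⊗α)∘Δ = Δ∘α`; (iv) `id + α` is bijective; (v) `id⊗id + α⊗α` is bijective. -/
structure IsAdmissible (α : A →ₗ[ℂ] A) : Prop where
  map_one : α 1 = 1
  map_mul : ∀ a b : A, α (a * b) = α a * α b
  star_cond : ∀ a : A, α (star (α (star a))) = a
  comul_comp : ∀ a : A,
    TensorProduct.map α α (comul (R := ℂ) a) = comul (R := ℂ) (α a)
  bij_add : Function.Bijective ((LinearMap.id + α : A →ₗ[ℂ] A))
  bij_tensor :
    Function.Bijective ((LinearMap.id + TensorProduct.map α α : A ⊗[ℂ] A →ₗ[ℂ] A ⊗[ℂ] A))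

/-- The `α`-twisted antipode `S_α = S ∘ α`. -/
def twistedAntipode (α : A →ₗ[ℂ] A) : A →ₗ[ℂ] A :=
  HopfAlgebra.antipode (R := ℂ) ∘ₗ α

variable {D : Type u} [NormedAddCommGroup D] [InnerProductSpace ℂ D]

/-- A `*`-representation of `A` on the complex inner product space `D`:
a unital algebra homomorphism into the linear endomorphisms of `D` such that
`⟨π(a*)ξ, ζ⟩ = ⟨ξ, π(a)ζ⟩`. -/
def IsStarRep (π : A →ₐ[ℂ] Module.End ℂ D) : Prop :=
  ∀ (a : A) (ξ ζ : D), ⟪π (star a) ξ, ζ⟫_ℂ = ⟪ξ, π a ζ⟫_ℂ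

/-- A cocycle for the representation `π`: `η(ab) = π(a)η(b) + ε(b)·η(a)`. -/
def IsCocycle (π : A →ₐ[ℂ] Module.End ℂ D) (η : A →ₗ[ℂ] D) : Prop :=
  ∀ a b : A, η (a * b) = π a (η b) + counit (R := ℂ) b • η a

/-- A generating functional on `A`: a linear functional with `L(1) = 0`,
`L(a*) = conj (L a)`, and `L(a*a)` a nonnegative real for `a ∈ ker ε`. -/
structure IsGenFunctional (L : A →ₗ[ℂ] ℂ) : Prop where
  map_one : L 1 = 0
  hermitian : ∀ a : A, L (star a) = conj (L a)
  cond_pos : ∀ a : A, counit (R := ℂ) a = 0 → 0 ≤ L (star a * a)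

/-- `η` yields the coboundary of `L`:
`L(ab) = ε(a)L(b) + L(a)ε(b) + ⟨η(a*), η(b)⟩`. -/
def YieldsCoboundary (η : A →ₗ[ℂ] D) (L : A →ₗ[ℂ] ℂ) : Prop :=
  ∀ a b : A, L (a * b) =
    counit (R := ℂ) a * L b + L a * counit (R := ℂ) b + ⟪η (star a), η b⟫_ℂ

/-- `η` is `α`-real: `⟨η(a), η(b)⟩ = ⟨η((S_α b)*), η(S_α(a*))⟩`. -/
def IsAlphaReal (α : A →ₗ[ℂ] A) (η : A →ₗ[ℂ] D) : Prop :=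
  ∀ a b : A, ⟪η a, η b⟫_ℂ =
    ⟪η (star (twistedAntipode α b)), η (twistedAntipode α (star a))⟫_ℂ

/-!
Write `S` for the antipode and `ε` for the counit. Since `α` respects the comultiplication,
`Δ(α a) = ∑ αxᵢ ⊗ αyᵢ`, so both formulas reduce to untwisted ones for the element `α a`
(`cocycle_star_antipode` and `cocycle_star`). For `Δ b = ∑ xᵢ ⊗ yᵢ`, taking the star of the
antipode identities `∑ xᵢ S(yᵢ) = ε(b) 1` and `∑ S(xᵢ) yᵢ = ε(b) 1` reverses the products. A
cocycle kills multiples of `1`, so the cocycle rule turns each identity into a vanishing sum of two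
parts; by the counit axiom the part carrying `ε` collapses to a single value of `η`.
-/

section

variable {ι : Type*} {s : Finset ι} {x y : ι → A} {b : A}

lemma cocycle_one {π : A →ₐ[ℂ] Module.End ℂ D} {η : A →ₗ[ℂ] D} (hη : IsCocycle π η) :
    η 1 = 0 := by
  simpa using hη 1 1

lemma star_counit_smul_sum (hb : comul (R := ℂ) b = ∑ i ∈ s, x i ⊗ₜ[ℂ] y i) (f : A →ₗ[ℂ] A) :
    ∑ i ∈ s, conj (counit (R := ℂ) (x i)) • star (f (y i)) = star (f b) := by
  have h : ∑ i ∈ s, counit (R := ℂ) (x i) • y i = b :=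
    Coalgebra.sum_counit_smul ⟨s, x, y, hb.symm⟩
  rw [← congrArg (fun z => star (f z)) h]
  simp [star_sum, star_smul]

/-- The common step of both formulas: a cocycle vanishes on scalar multiples of `1`, and the
cocycle rule expands its value on a sum of products. -/
lemma cocycle_sum_eq_neg {π : A →ₐ[ℂ] Module.End ℂ D} {η : A →ₗ[ℂ] D} (hη : IsCocycle π η)
    (u v : ι → A) (c : ℂ) (h : ∑ i ∈ s, u i * v i = c • 1) :
    η (∑ i ∈ s, counit (R := ℂ) (v i) • u i) = -∑ i ∈ s, π (u i) (η (v i)) := by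
  have h₀ := congrArg η h
  rw [map_sum, map_smul, cocycle_one hη, smul_zero] at h₀
  simp only [hη _ _, Finset.sum_add_distrib] at h₀
  rw [map_sum]
  simp only [map_smul]
  exact eq_neg_of_add_eq_zero_right h₀

/-- Untwisted form of the formula for `η(S(b)*)`, from `∑ xᵢ S(yᵢ) = ε(b) 1`. -/
lemma cocycle_star_antipode (hε : ∀ a : A, counit (R := ℂ) (star a) = conj (counit (R := ℂ) a))
    {π : A →ₐ[ℂ] Module.End ℂ D} {η : A →ₗ[ℂ] D} (hη : IsCocycle π η)
    (hb : comul (R := ℂ) b = ∑ i ∈ s, x i ⊗ₜ[ℂ] y i) :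
    η (star (HopfAlgebra.antipode ℂ b)) =
      -∑ i ∈ s, π (star (HopfAlgebra.antipode ℂ (y i))) (η (star (x i))) := by
  have h : ∑ i ∈ s, x i * HopfAlgebra.antipode ℂ (y i) = counit (R := ℂ) b • 1 :=
    HopfAlgebra.sum_mul_antipode_eq_smul ⟨s, x, y, hb.symm⟩
  have h' := congrArg star h
  simp only [star_sum, star_mul, star_smul, star_one] at h'
  rw [← cocycle_sum_eq_neg hη _ _ _ h', ← star_counit_smul_sum hb]
  simp only [hε]

/-- Untwisted form of the formula for `η(b*)`, from `∑ S(xᵢ) yᵢ = ε(b) 1`. -/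
lemma cocycle_star (hε : ∀ a : A, counit (R := ℂ) (star a) = conj (counit (R := ℂ) a))
    {π : A →ₐ[ℂ] Module.End ℂ D} {η : A →ₗ[ℂ] D} (hη : IsCocycle π η)
    (hb : comul (R := ℂ) b = ∑ i ∈ s, x i ⊗ₜ[ℂ] y i) :
    η (star b) = -∑ i ∈ s, π (star (y i)) (η (star (HopfAlgebra.antipode ℂ (x i)))) := by
  have h : ∑ i ∈ s, HopfAlgebra.antipode ℂ (x i) * y i = counit (R := ℂ) b • 1 :=
    HopfAlgebra.sum_antipode_mul_eq_smul ⟨s, x, y, hb.symm⟩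
  have h' := congrArg star h
  simp only [star_sum, star_mul, star_smul, star_one] at h'
  have hc := star_counit_smul_sum hb LinearMap.id
  simp only [LinearMap.id_apply] at hc
  rw [← cocycle_sum_eq_neg hη _ _ _ h', ← hc]
  simp only [hε, HopfAlgebra.counit_antipode]

end

/-- Lemma 2.1 (iii)-(iv): if `Δ(a) = ∑ᵢ xᵢ ⊗ yᵢ` then
`η((S_α(a))*) = −∑ᵢ π((S_α(yᵢ))*)(η((α(xᵢ))*))` and
`η((α(a))*) = −∑ᵢ π((α(yᵢ))*)(η((S_α(xᵢ))*))`. -/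
theorem cocycle_twistedAntipode_star_formulas (hA : IsHopfStar A)
    (α : A →ₗ[ℂ] A) (hα : IsAdmissible α)
    (π : A →ₐ[ℂ] Module.End ℂ D) (η : A →ₗ[ℂ] D)
    (hπ : IsStarRep π) (hη : IsCocycle π η) :
    ∀ (a : A) (ι : Type u) (s : Finset ι) (x y : ι → A),
      comul (R := ℂ) a = ∑ i ∈ s, x i ⊗ₜ[ℂ] y i →
      (η (star (twistedAntipode α a)) =
        -∑ i ∈ s, π (star (twistedAntipode α (y i))) (η (star (α (x i))))) ∧
      (η (star (α a)) =
        -∑ i ∈ s, π (star (α (y i))) (η (star (twistedAntipode α (x i))))) := by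
  intro a ι s x y ha
  have hb : comul (R := ℂ) (α a) = ∑ i ∈ s, α (x i) ⊗ₜ[ℂ] α (y i) := by
    rw [← hα.comul_comp, ha]
    simp
  exact ⟨cocycle_star_antipode hA.2.1 hη hb, cocycle_star hA.2.1 hη hb⟩
end

section
/- Let A be a Hopf *-algebra over ℂ, α : A → A an admissible bijection with α-twisted antipode S_α = S∘α, L : A → ℂ an S_α-invariant generating functional, and η : A → D a cocycle (for a *-representation π on a complex inner product space D) which yields the coboundary of L. Then η is α-real: ⟨η(a), η(b)⟩ = ⟨η((S_α(b))*), η(S_α(a*))⟩ for all a, b ∈ A. -/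
/-!
The functional `L` is applied to both sides of `S_α (a* b) = S_α b · S_α (a*)`. Since `S_α` is an
antihomomorphism preserving the counit and `L` is `S_α`-invariant, expanding `L (a* b)` and
`L (S_α b · S_α (a*))` with the coboundary identity produces the same two counit terms, so the two
inner-product terms agree.

The point needing an argument is `ε ∘ α = ε`, which is not among the admissibility axioms. It
holds because `α` is comultiplicative and injective (`star_cond` exhibits an inverse): applying
`ε ⊗ id` to `Δ (α a) = (α ⊗ α) (Δ a)` gives `α a = α (∑ ε (α a₁) a₂)`, hence
`a = ∑ ε (α a₁) a₂`, and applying `ε` yields `ε a = ε (α a)` (`counit_of_isAdmissible`).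
-/

open scoped TensorProduct ComplexConjugate ComplexOrder InnerProductSpace
open Coalgebra

universe u

variable {A : Type u} [Ring A] [HopfAlgebra ℂ A] [StarRing A] [StarModule ℂ A]

variable {D : Type u} [NormedAddCommGroup D] [InnerProductSpace ℂ D]

omit [StarModule ℂ A] in
lemma IsAdmissible.injective {α : A →ₗ[ℂ] A} (hα : IsAdmissible α) : Function.Injective α := by
  refine Function.LeftInverse.injective (g := fun x => star (α (star x))) fun a => ?_
  simpa using congrArg star (hα.star_cond (star a))

omit [StarModule ℂ A] in
/-- An admissible bijection preserves the counit, because it is comultiplicative and injective. -/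
lemma counit_of_isAdmissible {α : A →ₗ[ℂ] A} (hα : IsAdmissible α) (a : A) :
    counit (R := ℂ) (α a) = counit (R := ℂ) a := by
  let r := Coalgebra.Repr.arbitrary ℂ a
  have h_comul : comul (R := ℂ) (α a) = ∑ i ∈ r.index, α (r.left i) ⊗ₜ[ℂ] α (r.right i) := by
    rw [← hα.comul_comp, ← r.eq]
    simp
  have h_eq : ∑ i ∈ r.index, counit (R := ℂ) (α (r.left i)) • r.right i = a := by
    apply hα.injective
    have h := congrArg (TensorProduct.lid ℂ A) (Coalgebra.rTensor_counit_comul (R := ℂ) (α a))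
    rw [h_comul] at h
    simpa using h
  have h_right : ∑ i ∈ r.index, counit (R := ℂ) (r.right i) • r.left i = a := by
    have h := congrArg (TensorProduct.rid ℂ A) (Coalgebra.lTensor_counit_comul (R := ℂ) a)
    rw [← r.eq] at h
    simpa only [map_sum, LinearMap.lTensor_tmul, TensorProduct.rid_tmul, one_smul] using h
  calc counit (R := ℂ) (α a)
      = counit (R := ℂ) (α (∑ i ∈ r.index, counit (R := ℂ) (r.right i) • r.left i)) := by
        rw [h_right]
    _ = counit (R := ℂ) (∑ i ∈ r.index, counit (R := ℂ) (α (r.left i)) • r.right i) := by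
        simp [mul_comm]
    _ = counit (R := ℂ) a := by rw [h_eq]

omit [StarModule ℂ A] in
lemma counit_twistedAntipode {α : A →ₗ[ℂ] A} (hα : IsAdmissible α) (a : A) :
    counit (R := ℂ) (twistedAntipode α a) = counit (R := ℂ) a := by
  simp [twistedAntipode, counit_of_isAdmissible hα]

omit [StarModule ℂ A] in
lemma twistedAntipode_mul {α : A →ₗ[ℂ] A} (hα : IsAdmissible α) (a b : A) :
    twistedAntipode α (a * b) = twistedAntipode α b * twistedAntipode α a := by
  simp [twistedAntipode, hα.map_mul, HopfAlgebra.antipode_mul_antidistrib]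

/-- A cocycle yielding the coboundary of an `S_α`-invariant generating functional
is `α`-real. -/
theorem coboundary_of_invariant_isAlphaReal (hA : IsHopfStar A)
    (α : A →ₗ[ℂ] A) (hα : IsAdmissible α)
    (π : A →ₐ[ℂ] Module.End ℂ D) (η : A →ₗ[ℂ] D)
    (hπ : IsStarRep π) (hη : IsCocycle π η)
    (L : A →ₗ[ℂ] ℂ) (hL : IsGenFunctional L)
    (hinv : ∀ a : A, L (twistedAntipode α a) = L a)
    (hcob : YieldsCoboundary η L) :
    IsAlphaReal α η := by
  intro a b
  have h_cob := hcob (star a) b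
  have h_cob_twisted := hcob (twistedAntipode α b) (twistedAntipode α (star a))
  rw [← twistedAntipode_mul hα, hinv, hinv, hinv, counit_twistedAntipode hα,
    counit_twistedAntipode hα] at h_cob_twisted
  rw [star_star] at h_cob
  linear_combination h_cob_twisted - h_cob
end
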